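/- Let A and B be C*-algebras with A separable, and let φ, ψ: A → B be *-homomorphisms which are approximately Murray–von Neumann equivalent. If either (a) A and B are unital and φ and ψ are unital, or (c) B has stable rank one, then φ and ψ are approximately unitarily equivalent: in case (a) with unitaries in B, and in case (c) with unitaries in the minimal unitisation of B. -/

import Mathlib

open Filter Topology Set

universe u v


section MvN

variable {A : Type u} {B : Type v} [NonUnitalCStarAlgebra A] [NonUnitalCStarAlgebra B]

/-- Two *-homomorphisms `φ, ψ : A → B` are approximately Murray–von Neumann equivalent if
for every finite `F ⊆ A` and `ε > 0` there is `u ∈ B` with `‖u* φ(a) u - ψ(a)‖ < ε` and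
`‖u ψ(a) u* - φ(a)‖ < ε` for all `a ∈ F`. -/
def ApproxMvNEquiv (φ ψ : A →⋆ₙₐ[ℂ] B) : Prop :=
  ∀ (F : Finset A) (ε : ℝ), 0 < ε → ∃ u : B,
    ∀ a ∈ F, ‖star u * φ a * u - ψ a‖ < ε ∧ ‖u * ψ a * star u - φ a‖ < ε

end MvN

theorem aux_polar {D : Type*} [CStarAlgebra D] [PartialOrder D] [StarOrderedRing D]
    (q : D) (hq : 0 ≤ q) (η : ℝ) (hη : 0 < η) :
    ∃ δ > 0, ∀ y : D, IsUnit y → ‖star y * y - q * q‖ < δ →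
      ∃ w ∈ unitary D, ‖y - w * q‖ < η := by
  have hqq : 0 ≤ q * q := by
    have := star_mul_self_nonneg q
    rwa [(IsSelfAdjoint.of_nonneg hq).star_eq] at this
  have hc := (CFC.continuousOn_sqrt (A := D)) (q * q) hqq
  rw [Metric.continuousWithinAt_iff] at hc
  obtain ⟨δ, hδ, hc⟩ := hc η hη
  refine ⟨δ, hδ, fun y hy hyq => ?_⟩
  have h1 := hc (star_mul_self_nonneg y) (by rwa [dist_eq_norm])
  rw [CFC.sqrt_mul_self q hq, dist_eq_norm] at h1
  have hpos : 0 ≤ CFC.sqrt (star y * y) := CFC.sqrt_nonneg _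
  have hsq := CFC.sqrt_mul_sqrt_self (star y * y) (star_mul_self_nonneg y)
  have hu : IsUnit (CFC.sqrt (star y * y)) :=
    (CFC.isUnit_sqrt_iff _ (star_mul_self_nonneg y)).2 (hy.star.mul hy)
  have hsa := (IsSelfAdjoint.of_nonneg hpos).star_eq
  generalize CFC.sqrt (star y * y) = r at *
  obtain ⟨r, rfl⟩ := hu
  have hri : star (↑r⁻¹ : D) = ↑r⁻¹ := by
    have : star r = r := Units.ext hsa
    rw [← Units.coe_star, star_inv, this]
  have hy' : y = (y * ↑r⁻¹) * r := by simp [mul_assoc]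
  have hw : star (y * (↑r⁻¹ : D)) * (y * ↑r⁻¹) = 1 := by
    rw [star_mul, hri, mul_assoc, ← mul_assoc (star y), ← hsq]; simp [mul_assoc]
  have hwu : IsUnit (y * (↑r⁻¹ : D)) := hy.mul r⁻¹.isUnit
  have hw2 : (y * (↑r⁻¹ : D)) * star (y * ↑r⁻¹) = 1 := by
    obtain ⟨v, hv⟩ := hwu
    rw [← hv] at hw ⊢
    have : star (v : D) = ↑v⁻¹ := by
      rw [← mul_one (star (v : D)), ← v.mul_inv, ← mul_assoc, hw, one_mul]
    rw [this]; simp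
  have hmem : y * (↑r⁻¹ : D) ∈ unitary D := Unitary.mem_iff.2 ⟨hw, hw2⟩
  refine ⟨y * ↑r⁻¹, hmem, ?_⟩
  have : y - y * ↑r⁻¹ * q = (y * ↑r⁻¹) * (r - q) := by
    rw [mul_sub, ← hy']
  rw [this, CStarRing.norm_mem_unitary_mul _ hmem]
  exact h1

theorem aux_polar_dense {D : Type*} [CStarAlgebra D] [PartialOrder D] [StarOrderedRing D]
    (hD : Dense {x : D | IsUnit x})
    (q : D) (hq : 0 ≤ q) (η : ℝ) (hη : 0 < η) :
    ∃ δ > 0, ∀ x : D, ‖star x * x - q * q‖ < δ →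
      ∃ w ∈ unitary D, ‖x - w * q‖ < η := by
  obtain ⟨δ, hδ, H⟩ := aux_polar q hq (η / 2) (by positivity)
  refine ⟨δ, hδ, fun x hx => ?_⟩
  have ho : IsOpen ({y : D | ‖star y * y - q * q‖ < δ} ∩ {y : D | ‖x - y‖ < η / 2}) :=
    (isOpen_lt (by fun_prop) (by fun_prop)).inter (isOpen_lt (by fun_prop) (by fun_prop))
  obtain ⟨y, ⟨hy1, hy2⟩, hy3⟩ := hD.inter_open_nonempty _ ho
    ⟨x, hx, by simpa using hη⟩
  obtain ⟨w, hw, hw'⟩ := H y hy3 hy1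
  refine ⟨w, hw, ?_⟩
  have hy2 : ‖x - y‖ < η / 2 := hy2
  calc ‖x - w * q‖ = ‖(x - y) + (y - w * q)‖ := by congr 1; abel
    _ ≤ ‖x - y‖ + ‖y - w * q‖ := norm_add_le _ _
    _ < η := by linarith

theorem aux_est {D : Type*} [CStarAlgebra D] (P Q a b u w : D) (η δ : ℝ) (hη1 : η ≤ 1)
    (hw : w ∈ unitary D) (hP : ‖P‖ ≤ 1) (hQ : ‖Q‖ ≤ 1) (hPs : star P = P) (hQs : star Q = Q)
    (hx : ‖P * u - w * Q‖ < η) (hb : ‖Q * b * Q - b‖ ≤ 2 * δ) (ha : ‖P * a * P - a‖ ≤ 2 * δ)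
    (hu : ‖u * b * star u - a‖ < δ) :
    ‖star w * a * w - b‖ ≤ 5 * δ + 3 * η * ‖b‖ := by
  have hww := hw
  rw [Unitary.mem_iff] at hww
  have hη : 0 < η := (norm_nonneg _).trans_lt hx
  have e0 : ‖star w * a * w - b‖ = ‖a - w * b * star w‖ := by
    have : star w * a * w - b = star w * (a - w * b * star w) * w := by
      simp only [mul_sub, sub_mul, mul_assoc, hww.1, mul_one]
      rw [← mul_assoc (star w) w, hww.1, one_mul]
    rw [this, CStarRing.norm_mul_mem_unitary _ hw,
      CStarRing.norm_mem_unitary_mul _ (Unitary.star_mem hw)]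
  set x := P * u with hxd
  set z := w * Q with hzd
  have hz : ‖z‖ ≤ 1 := by rw [hzd, CStarRing.norm_mem_unitary_mul _ hw]; exact hQ
  have hxn : ‖x‖ ≤ 2 := by
    calc ‖x‖ = ‖(x - z) + z‖ := by simp
      _ ≤ ‖x - z‖ + ‖z‖ := norm_add_le _ _
      _ ≤ 2 := by linarith
  have key : a - w * b * star w = -(P * a * P - a) - P * (u * b * star u - a) * P
      + ((x - z) * b * star z + x * b * star (x - z)) + w * (Q * b * Q - b) * star w := by
    simp only [hxd, hzd, star_mul, star_sub, hPs, hQs]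
    noncomm_ring
  have n1 : ‖P * (u * b * star u - a) * P‖ ≤ δ := by
    calc _ ≤ ‖P‖ * ‖u * b * star u - a‖ * ‖P‖ := norm_mul₃_le
      _ ≤ 1 * ‖u * b * star u - a‖ * 1 := by gcongr
      _ ≤ δ := by linarith
  have n2 : ‖(x - z) * b * star z‖ ≤ η * ‖b‖ := by
    calc _ ≤ ‖x - z‖ * ‖b‖ * ‖star z‖ := norm_mul₃_le
      _ ≤ η * ‖b‖ * 1 := by rw [norm_star]; gcongr
      _ = _ := by ring
  have n3 : ‖x * b * star (x - z)‖ ≤ 2 * η * ‖b‖ := by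
    calc _ ≤ ‖x‖ * ‖b‖ * ‖star (x - z)‖ := norm_mul₃_le
      _ ≤ 2 * ‖b‖ * η := by rw [norm_star]; gcongr
      _ = _ := by ring
  have n4 : ‖w * (Q * b * Q - b) * star w‖ ≤ 2 * δ := by
    rw [CStarRing.norm_mul_mem_unitary _ (Unitary.star_mem hw),
      CStarRing.norm_mem_unitary_mul _ hw]
    exact hb
  rw [e0, key]
  have t1 := norm_add_le (-(P * a * P - a) - P * (u * b * star u - a) * P
      + ((x - z) * b * star z + x * b * star (x - z))) (w * (Q * b * Q - b) * star w)
  have t2 := norm_add_le (-(P * a * P - a) - P * (u * b * star u - a) * P)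
      ((x - z) * b * star z + x * b * star (x - z))
  have t3 := norm_add_le ((x - z) * b * star z) (x * b * star (x - z))
  have t4 := norm_sub_le (-(P * a * P - a)) (P * (u * b * star u - a) * P)
  rw [norm_neg] at t4
  linarith

theorem aux_core {A D : Type*} [NonUnitalCStarAlgebra A] [CStarAlgebra D]
    (f g : A →⋆ₙₐ[ℂ] D)
    (h : ∀ (F : Finset A) (ε : ℝ), 0 < ε → ∃ u : D,
      ∀ a ∈ F, ‖star u * f a * u - g a‖ < ε ∧ ‖u * g a * star u - f a‖ < ε)
    (F : Finset A) (ε : ℝ) (hε : 0 < ε)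
    (e : A) (hes : star e = e) (he1 : ‖e‖ ≤ 1)
    (heF : ∀ a ∈ F, ‖e * a - a‖ ≤ ε / 10 ∧ ‖a * e - a‖ ≤ ε / 10)
    (H : ∀ η > 0, ∃ δ > 0, ∃ F' : Finset A, ∀ u : D,
      (∀ a ∈ F', ‖star u * f a * u - g a‖ < δ ∧ ‖u * g a * star u - f a‖ < δ) →
      ∃ w ∈ unitary D, ‖f e * u - w * g e‖ < η) :
    ∃ w ∈ unitary D, ∀ a ∈ F, ‖star w * f a * w - g a‖ < ε := by
  classical
  have hM0 : 0 ≤ ∑ a ∈ F, ‖a‖ := Finset.sum_nonneg fun _ _ => norm_nonneg _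
  set M := ∑ a ∈ F, ‖a‖
  set η := min 1 (ε / (12 * (M + 1))) with hη
  have hη0 : 0 < η := by positivity
  obtain ⟨δ, hδ, F', H⟩ := H η hη0
  obtain ⟨u, hu⟩ := h (F ∪ F') (min δ (ε / 10)) (by positivity)
  obtain ⟨w, hw, hwx⟩ := H u fun a ha =>
    ⟨(hu a (Finset.mem_union_right _ ha)).1.trans_le (min_le_left _ _),
     (hu a (Finset.mem_union_right _ ha)).2.trans_le (min_le_left _ _)⟩
  refine ⟨w, hw, fun a ha => ?_⟩
  have hae : ‖e * a * e - a‖ ≤ 2 * (ε / 10) := by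
    have : e * a * e - a = e * (a * e - a) + (e * a - a) := by noncomm_ring
    rw [this]
    have t := norm_add_le (e * (a * e - a)) (e * a - a)
    have t2 : ‖e * (a * e - a)‖ ≤ 1 * ‖a * e - a‖ := (norm_mul_le _ _).trans (by gcongr)
    linarith [heF a ha]
  have hk : ∀ k : A →⋆ₙₐ[ℂ] D, ‖k e * k a * k e - k a‖ ≤ 2 * (ε / 10) := fun k => by
    rw [← map_mul, ← map_mul, ← map_sub]
    exact (NonUnitalStarAlgHom.norm_apply_le k _).trans hae
  have := aux_est (f e) (g e) (f a) (g a) u w η (ε / 10) (min_le_left _ _) hw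
    ((NonUnitalStarAlgHom.norm_apply_le f _).trans he1)
    ((NonUnitalStarAlgHom.norm_apply_le g _).trans he1)
    (by rw [← map_star, hes]) (by rw [← map_star, hes]) hwx (hk g) (hk f)
    ((hu a (Finset.mem_union_left _ ha)).2.trans_le (min_le_right _ _))
  have hga : ‖g a‖ ≤ M := (NonUnitalStarAlgHom.norm_apply_le g _).trans
    (Finset.single_le_sum (f := fun a => ‖a‖) (fun _ _ => norm_nonneg _) ha)
  have hηM : η * ‖g a‖ ≤ ε / 12 := by
    calc η * ‖g a‖ ≤ (ε / (12 * (M + 1))) * (M + 1) := by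
          gcongr
          · exact min_le_right _ _
          · linarith
      _ = ε / 12 := by field_simp
  linarith

theorem aux_unital {A D : Type*} [NonUnitalCStarAlgebra A] [CStarAlgebra D]
    (f g : A →⋆ₙₐ[ℂ] D)
    (h : ∀ (F : Finset A) (ε : ℝ), 0 < ε → ∃ u : D,
      ∀ a ∈ F, ‖star u * f a * u - g a‖ < ε ∧ ‖u * g a * star u - f a‖ < ε)
    (e : A) (he : ∀ x : A, e * x = x ∧ x * e = x) (hf : f e = 1) (hg : g e = 1)
    (F : Finset A) (ε : ℝ) (hε : 0 < ε) :
    ∃ w ∈ unitary D, ∀ a ∈ F, ‖star w * f a * w - g a‖ < ε := by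
  let _ := CStarAlgebra.spectralOrder D
  have := CStarAlgebra.spectralOrderedRing D
  have hes : star e = e := by
    have h1 := (he (star e)).2
    have h2 := congrArg star h1
    rw [star_mul, star_star, (he (star e)).2] at h2
    exact h2
  have he1 : ‖e‖ ≤ 1 := by
    have := CStarRing.norm_star_mul_self (x := e)
    rw [hes, (he e).1] at this
    nlinarith [norm_nonneg e]
  refine aux_core f g h F ε hε e hes he1 (fun a _ => ?_) (fun η hη => ?_)
  · rw [(he a).1, (he a).2]; simp; positivity
  · obtain ⟨δ, hδ, H⟩ := aux_polar (1 : D) zero_le_one η hη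
    refine ⟨min δ 1, by positivity, {e}, fun u hu => ?_⟩
    obtain ⟨h1, h2⟩ := hu e (by simp)
    simp only [hf, hg, mul_one, one_mul] at h1 h2 ⊢
    have key : ∀ t : D, ‖t - 1‖ < 1 → IsUnit t := fun t ht => by
      have := (Units.oneSub (1 - t) (by rwa [norm_sub_rev])).isUnit
      simpa using this
    have k1 := key _ (h1.trans_le (min_le_right _ _))
    have k2 := key _ (h2.trans_le (min_le_right _ _))
    have hu : IsUnit u := by
      obtain ⟨s, hs⟩ := k1
      obtain ⟨t, ht⟩ := k2
      rw [isUnit_iff_exists_and_exists]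
      refine ⟨⟨star u * ↑t⁻¹, ?_⟩, ⟨↑s⁻¹ * star u, ?_⟩⟩
      · rw [← mul_assoc, ← ht]; simp
      · rw [mul_assoc, ← hs]; simp
    simpa using H u hu (by simpa using h1.trans_le (min_le_left _ _))

/-- A C⋆-algebra with a two-sided unit element, as a unital C⋆-algebra. -/
noncomputable abbrev auxCStar (B : Type*) [i : NonUnitalCStarAlgebra B] (e : B)
    (he : ∀ y : B, e * y = y ∧ y * e = y) : CStarAlgebra B :=
  letI r : NormedRing B :=
    { i.toNonUnitalNormedRing with
      one := e
      one_mul := fun y => (he y).1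
      mul_one := fun y => (he y).2 }
  letI al : Algebra ℂ B := Algebra.ofModule (fun r x y => smul_mul_assoc r x y)
    (fun r x y => mul_smul_comm r x y)
  { r, i with
    toAlgebra := al
    norm_smul_le := fun c x => norm_smul_le c x }

theorem aux_sr1 {A B : Type*} [NonUnitalCStarAlgebra A] [NonUnitalCStarAlgebra B]
    (φ ψ : A →⋆ₙₐ[ℂ] B) (h : ApproxMvNEquiv φ ψ)
    (hD : Dense {x : Unitization ℂ B | IsUnit x})
    (F : Finset A) (ε : ℝ) (hε : 0 < ε) : ∃ u ∈ unitary (Unitization ℂ B),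
        ∀ a ∈ F, ‖star u * (φ a : Unitization ℂ B) * u - (ψ a : Unitization ℂ B)‖ < ε := by
  classical
  let _ := CStarAlgebra.spectralOrder (Unitization ℂ B)
  have := CStarAlgebra.spectralOrderedRing (Unitization ℂ B)
  let _ := CStarAlgebra.spectralOrder A
  have := CStarAlgebra.spectralOrderedRing A
  let f := (Unitization.inrNonUnitalStarAlgHom ℂ B).comp φ
  let g := (Unitization.inrNonUnitalStarAlgHom ℂ B).comp ψ
  have hfg : ∀ (F : Finset A) (ε : ℝ), 0 < ε → ∃ u : Unitization ℂ B,
      ∀ a ∈ F, ‖star u * f a * u - g a‖ < ε ∧ ‖u * g a * star u - f a‖ < ε := by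
    intro F ε hε
    obtain ⟨u, hu⟩ := h F ε hε
    refine ⟨(u : Unitization ℂ B), fun a ha => ?_⟩
    obtain ⟨h1, h2⟩ := hu a ha
    rw [← Unitization.norm_inr (𝕜 := ℂ)] at h1 h2
    simp only [Unitization.inr_sub, Unitization.inr_mul, Unitization.inr_star] at h1 h2
    exact ⟨h1, h2⟩
  have hA := CStarAlgebra.increasingApproximateUnit A
  have hne := hA.neBot
  have hev : ∀ᶠ e in CStarAlgebra.approximateUnit A, ∀ a ∈ F,
      ‖e * a - a‖ ≤ ε / 10 ∧ ‖a * e - a‖ ≤ ε / 10 := by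
    rw [Filter.eventually_all_finset]
    intro a _
    have t1 := (hA.tendsto_mul_right a).eventually (Metric.closedBall_mem_nhds a (show 0 < ε / 10 by positivity))
    have t2 := (hA.tendsto_mul_left a).eventually (Metric.closedBall_mem_nhds a (show 0 < ε / 10 by positivity))
    filter_upwards [t1, t2] with e h1 h2
    rw [dist_eq_norm] at h1 h2
    exact ⟨h1, h2⟩
  obtain ⟨e, ⟨heF, he0⟩, he1⟩ := ((hev.and hA.eventually_nonneg).and hA.eventually_norm).exists
  have hes := (IsSelfAdjoint.of_nonneg he0).star_eq
  refine aux_core f g hfg F ε hε e hes he1 heF (fun η hη => ?_)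
  have hge : 0 ≤ g e := by
    have := OrderHomClass.mono g he0
    simpa using this
  obtain ⟨δ, hδ, H⟩ := aux_polar_dense hD (g e) hge η hη
  refine ⟨δ, hδ, {e * e}, fun u hu => H _ ?_⟩
  have := (hu (e * e) (by simp)).1
  rw [map_mul, map_mul] at this
  rw [star_mul, ← map_star, hes]
  simpa only [mul_assoc] using this

/-- Let `A` be separable and `φ, ψ : A → B` approximately Murray–von
Neumann equivalent *-homomorphisms. If (a) `A`, `B`, `φ`, `ψ` are unital, then `φ` and `ψ`
are approximately unitarily equivalent with unitaries in `B`; if (c) `B` has stable rank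
one (invertibles dense in the minimal unitisation), then they are approximately unitarily
equivalent with unitaries in the minimal unitisation of `B`. -/
theorem approxMvNEquiv_implies_approxUnitaryEquiv
    {A : Type u} {B : Type v} [NonUnitalCStarAlgebra A] [NonUnitalCStarAlgebra B]
    [TopologicalSpace.SeparableSpace A]
    (φ ψ : A →⋆ₙₐ[ℂ] B) (h : ApproxMvNEquiv φ ψ) :
    ((∀ (eA : A) (eB : B), (∀ x : A, eA * x = x ∧ x * eA = x) →
      (∀ y : B, eB * y = y ∧ y * eB = y) → φ eA = eB → ψ eA = eB →
      ∀ (F : Finset A) (ε : ℝ), 0 < ε → ∃ u : B, star u * u = eB ∧ u * star u = eB ∧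
        ∀ a ∈ F, ‖star u * φ a * u - ψ a‖ < ε)) ∧
    (Dense {x : Unitization ℂ B | IsUnit x} →
      ∀ (F : Finset A) (ε : ℝ), 0 < ε → ∃ u ∈ unitary (Unitization ℂ B),
        ∀ a ∈ F, ‖star u * (φ a : Unitization ℂ B) * u - (ψ a : Unitization ℂ B)‖ < ε) := by
  refine ⟨fun eA eB hA hB hφ hψ F ε hε => ?_, fun hD F ε hε => aux_sr1 φ ψ h hD F ε hε⟩
  let _ := auxCStar B eB hB
  obtain ⟨w, hw, H⟩ := aux_unital (D := B) φ ψ h eA hA hφ hψ F ε hε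
  exact ⟨w, (Unitary.mem_iff.1 hw).1, (Unitary.mem_iff.1 hw).2, H⟩
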